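/- Let n = 2p with p ≥ 1 and let F ∈ 𝔉_n^+. Then every eigenvalue of the middle problem L_p for F is real; that is, if λ ∈ ℂ and there exists a not identically zero solution Y of Y' = (F + Λ(λ))Y on [0,1] with Y_j(0) = 0 for 0 ≤ j ≤ p−1 and Y_j(1) = 0 for 0 ≤ j ≤ p−1, then λ ∈ ℝ. (Self-adjointness of the problem L_p, Section 3.) -/

import Mathlib

/-!
The Lagrange bracket `⟨Ȳ, Y⟩ = ∑ⱼ (-1)ʲ Ȳⱼ Yₙ₋₁₋ⱼ` of a solution `Y` with its own conjugate is
absolutely continuous, and the symmetry of `F ∈ 𝔉ₙ⁺` (with `n` even) makes the contribution of `F`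
to its derivative cancel, leaving `⟨Ȳ, Y⟩' = (λ - λ̄) |Y₀|²` a.e. (`bracket_deriv_algebra`).
Every term of the bracket contains a factor with index `< p`, so the boundary conditions
of the middle problem make the bracket vanish at both `0` and `1`. Integrating by parts
(`integral_mul_primitives`) gives `(λ - λ̄) ∫₀¹ |Y₀|² = 0`.

If `λ` were not real, then `Y₀ = 0` on `[0,1]`. The equations have the form
`Yⱼ' = ∑_{k ≤ j} fⱼₖ Yₖ + Yⱼ₊₁` for `j < n - 1`, so `Y₀ = ⋯ = Yⱼ = 0` forces `Yⱼ₊₁ = 0`, and hence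
`Y = 0` on `[0,1]` (`sol_eq_zero`), contrary to assumption. In particular no uniqueness theorem for
the Cauchy problem is needed.
-/

open MeasureTheory

/-- The matrix `Λ(λ)`: the `(n,1)` entry (0-based: `(n-1,0)`) equals `λ`, others `0`. -/
def LambdaMat (n : ℕ) (lam : ℂ) : Matrix (Fin n) (Fin n) ℂ :=
  fun k j => if (k : ℕ) = n - 1 ∧ (j : ℕ) = 0 then lam else 0

/-- The class `𝔉_n`: integrable entries, `f_{k,k+1} = 1`, `f_{k,j} = 0` for `j > k+1`,
zero trace (1-based indices of the paper correspond to 0-based indices here). -/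
def IsFrakF (n : ℕ) (F : ℝ → Matrix (Fin n) (Fin n) ℂ) : Prop :=
  (∀ k j : Fin n, IntegrableOn (fun x => F x k j) (Set.Icc (0:ℝ) 1)) ∧
  (∀ x : ℝ, ∀ k j : Fin n, (j : ℕ) = (k : ℕ) + 1 → F x k j = 1) ∧
  (∀ x : ℝ, ∀ k j : Fin n, (j : ℕ) > (k : ℕ) + 1 → F x k j = 0) ∧
  (∀ x : ℝ, ∑ k : Fin n, F x k k = 0)

/-- The matrix `F*`: `f*_{k,j} = (-1)^{k+j+1} f_{n-j+1,n-k+1}` (1-based), i.e. 0-based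
`f*_{a,b} = (-1)^{a+b+1} f_{n-1-b,n-1-a}`. -/
def FStar (n : ℕ) (F : ℝ → Matrix (Fin n) (Fin n) ℂ) : ℝ → Matrix (Fin n) (Fin n) ℂ :=
  fun x a b => (-1 : ℂ) ^ ((a : ℕ) + (b : ℕ) + 1) * F x b.rev a.rev

/-- A solution of the system `Y' = (F + Λ(λ)) Y` on `[0,1]`, in integral form. -/
def IsSol (n : ℕ) (F : ℝ → Matrix (Fin n) (Fin n) ℂ) (lam : ℂ) (Y : ℝ → Fin n → ℂ) : Prop :=
  ContinuousOn Y (Set.Icc (0:ℝ) 1) ∧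
  ∀ x ∈ Set.Icc (0:ℝ) 1, ∀ j : Fin n,
    Y x j = Y 0 j + ∫ t in (0:ℝ)..x, ((F t + LambdaMat n lam).mulVec (Y t)) j

/-- A solution of the star system `Z' = (F* + (-1)^n Λ(μ)) Z` on `[0,1]`. -/
def IsSolStar (n : ℕ) (F : ℝ → Matrix (Fin n) (Fin n) ℂ) (mu : ℂ) (Z : ℝ → Fin n → ℂ) : Prop :=
  IsSol n (FStar n F) ((-1 : ℂ) ^ n * mu) Z

/-- The Lagrange bracket `⟨Z,Y⟩(x) = Σ_{j=0}^{n-1} (-1)^j Z_j(x) Y_{n-1-j}(x)`. -/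
noncomputable def bracket (n : ℕ) (Z Y : ℝ → Fin n → ℂ) (x : ℝ) : ℂ :=
  ∑ j : Fin n, (-1 : ℂ) ^ (j : ℕ) * Z x j * Y x j.rev

/-- The self-adjoint class `𝔉_n⁺`:
`f_{k,j}(x) = (-1)^{k+j+1} conj(f_{n-j+1,n-k+1}(x))` for a.e. `x ∈ [0,1]`. -/
def IsFrakFPlus (n : ℕ) (F : ℝ → Matrix (Fin n) (Fin n) ℂ) : Prop :=
  IsFrakF n F ∧
  ∀ᵐ x ∂(volume.restrict (Set.Icc (0:ℝ) 1)), ∀ a b : Fin n,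
    F x a b = (-1 : ℂ) ^ ((a : ℕ) + (b : ℕ) + 1) * (starRingEnd ℂ) (F x b.rev a.rev)

/-- A complex-valued indefinite integral is absolutely continuous, because its increments are
dominated by those of the indefinite integral of the norm. -/
lemma absolutelyContinuous_primitive {u : ℝ → ℂ} {a b : ℝ} (hu : IntervalIntegrable u volume a b) :
    AbsolutelyContinuousOnInterval (fun x => ∫ t in a..x, u t) a b := by
  have h := hu.norm.absolutelyContinuousOnInterval_intervalIntegral (c := a) (by simp)
  unfold AbsolutelyContinuousOnInterval at h ⊢
  refine squeeze_zero' (.of_forall fun _ => Finset.sum_nonneg fun i _ => dist_nonneg) ?_ h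
  rw [Filter.eventually_inf_principal]
  filter_upwards with E hE
  refine Finset.sum_le_sum fun i hi => ?_
  have hm := hE.1 i hi
  have sub : ∀ z ∈ Set.uIcc a b, IntervalIntegrable u volume a z := fun z hz =>
    hu.mono_set (Set.uIcc_subset_uIcc Set.left_mem_uIcc hz)
  rw [dist_comm, dist_comm (∫ v in a..(E.2 i).1, ‖u v‖), dist_eq_norm, dist_eq_norm,
    intervalIntegral.integral_interval_sub_left (sub _ hm.2) (sub _ hm.1),
    intervalIntegral.integral_interval_sub_left (sub _ hm.2).norm (sub _ hm.1).norm]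
  exact intervalIntegral.norm_integral_le_abs_integral_norm

/-- Integration by parts for two absolutely continuous complex functions, given as primitives of
`u` and `v`. -/
lemma integral_mul_primitives {u v : ℝ → ℂ} (c d : ℂ)
    (hu : IntervalIntegrable u volume 0 1) (hv : IntervalIntegrable v volume 0 1) :
    ∫ x in (0:ℝ)..1, (u x * (d + ∫ t in (0:ℝ)..x, v t) + (c + ∫ t in (0:ℝ)..x, u t) * v x)
      = (c + ∫ t in (0:ℝ)..1, u t) * (d + ∫ t in (0:ℝ)..1, v t) - c * d := by
  have const_ac : ∀ e : ℂ, AbsolutelyContinuousOnInterval (fun _ : ℝ => e) 0 1 := fun e => by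
    simpa [AbsolutelyContinuousOnInterval] using tendsto_const_nhds
  have hU : AbsolutelyContinuousOnInterval (fun x => c + ∫ t in (0:ℝ)..x, u t) 0 1 :=
    (const_ac c).add (absolutelyContinuous_primitive hu)
  have hV : AbsolutelyContinuousOnInterval (fun x => d + ∫ t in (0:ℝ)..x, v t) 0 1 :=
    (const_ac d).add (absolutelyContinuous_primitive hv)
  have hw : IntervalIntegrable
      (fun x => u x * (d + ∫ t in (0:ℝ)..x, v t) + (c + ∫ t in (0:ℝ)..x, u t) * v x)
      volume 0 1 :=
    (hu.mul_continuousOn hV.continuousOn).add (hv.continuousOn_mul hU.continuousOn)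
  have hW := absolutelyContinuous_primitive hw
  obtain ⟨C, hC⟩ := ((hU.smul hV).sub hW).const_of_ae_hasDerivAt_zero (by
    filter_upwards [hu.ae_hasDerivAt_integral, hv.ae_hasDerivAt_integral,
      hw.ae_hasDerivAt_integral] with x h1 h2 h3 hx
    have k1 := (h1 hx 0 (by simp)).const_add c
    have k2 := (h2 hx 0 (by simp)).const_add d
    have k3 := h3 hx 0 (by simp)
    have := (k1.mul k2).sub k3
    simpa using this)
  have e0 := hC 0 (by simp)
  have e1 := hC 1 (by simp)
  simp only [Pi.sub_apply, smul_eq_mul, Pi.mul_apply, intervalIntegral.integral_same, add_zero,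
    sub_zero] at e0 e1
  linear_combination e0 - e1

/-- A continuous function on `[0,1]` all of whose integrals `∫₀ˣ` vanish is zero. -/
lemma eq_zero_of_primitive_eq_zero {f : ℝ → ℂ} (hf : ContinuousOn f (Set.Icc 0 1))
    (h : ∀ x ∈ Set.Icc (0:ℝ) 1, ∫ t in (0:ℝ)..x, f t = 0) : ∀ x ∈ Set.Icc (0:ℝ) 1, f x = 0 := by
  have hi : IntervalIntegrable f volume 0 1 :=
    ContinuousOn.intervalIntegrable (by rwa [Set.uIcc_of_le zero_le_one])
  refine Measure.eqOn_Icc_of_ae_eq volume (zero_ne_one) (g := fun _ => 0) ?_ hf continuousOn_const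
  rw [Filter.EventuallyEq, Measure.restrict_congr_set Ioo_ae_eq_Icc.symm,
    ae_restrict_iff' measurableSet_Ioo]
  filter_upwards [hi.ae_hasDerivAt_integral] with x hx hx'
  have hd := hx (by rw [Set.uIcc_of_le zero_le_one]; exact Set.Ioo_subset_Icc_self hx') 0 (by simp)
  refine hd.unique ((hasDerivAt_const x (0:ℂ)).congr_of_eventuallyEq ?_)
  filter_upwards [Ioo_mem_nhds hx'.1 hx'.2] with y hy
  exact h y (Set.Ioo_subset_Icc_self hy)

/-- Each component of the right-hand side of the system is integrable along a continuous `Y`. -/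
lemma intervalIntegrable_rhs {n : ℕ} {F : ℝ → Matrix (Fin n) (Fin n) ℂ} (hF : IsFrakF n F)
    (lam : ℂ) {Y : ℝ → Fin n → ℂ} (hY : ContinuousOn Y (Set.Icc 0 1)) (j : Fin n) :
    IntervalIntegrable (fun t => ((F t + LambdaMat n lam).mulVec (Y t)) j) volume 0 1 := by
  simp only [Matrix.mulVec, dotProduct]
  have : (fun t => ∑ k, (F t + LambdaMat n lam) j k * Y t k)
      = ∑ k, fun t => (F t + LambdaMat n lam) j k * Y t k := by
    ext t; simp
  rw [this]
  refine IntervalIntegrable.sum _ fun k _ => IntervalIntegrable.mul_continuousOn ?_ ?_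
  · refine IntervalIntegrable.add (f := fun t => F t j k) (g := fun _ => LambdaMat n lam j k) ?_
      (by simp)
    rw [intervalIntegrable_iff_integrableOn_Icc_of_le zero_le_one]
    exact hF.1 j k
  · rw [Set.uIcc_of_le zero_le_one]
    exact (continuous_apply k).comp_continuousOn hY

/-- The action of `Λ(λ)` on a vector: `λ y₀` in the last component, zero elsewhere. -/
lemma lambdaMat_mulVec {n : ℕ} (hn : 0 < n) (lam : ℂ) (y : Fin n → ℂ) (j : Fin n) :
    (LambdaMat n lam).mulVec y j = if j.rev = ⟨0, hn⟩ then lam * y ⟨0, hn⟩ else 0 := by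
  have hj : j.rev = ⟨0, hn⟩ ↔ (j : ℕ) = n - 1 := by
    rw [Fin.ext_iff, Fin.val_rev]; simp only; omega
  have h0 : ∀ k : Fin n, (k : ℕ) = 0 ↔ k = ⟨0, hn⟩ := fun k => by rw [Fin.ext_iff]
  by_cases h : (j : ℕ) = n - 1
  · simp [Matrix.mulVec, dotProduct, LambdaMat, hj, h, h0]
  · simp [Matrix.mulVec, dotProduct, LambdaMat, hj, h]

/-- The pointwise Lagrange identity: if `A` has the symmetry of the class `𝔉ₙ⁺` with `n` even, the
derivative of `⟨ȳ, y⟩` along `y' = (A + Λ(λ)) y` is `(λ - λ̄) |y₀|²`. -/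
lemma bracket_deriv_algebra {n : ℕ} (hn : 0 < n) (hev : Even n) (A : Matrix (Fin n) (Fin n) ℂ)
    (hA : ∀ a b : Fin n, A a b =
      (-1 : ℂ) ^ ((a : ℕ) + (b : ℕ) + 1) * (starRingEnd ℂ) (A b.rev a.rev))
    (lam : ℂ) (y : Fin n → ℂ) :
    ∑ j : Fin n, (-1 : ℂ) ^ (j : ℕ) *
      ((starRingEnd ℂ) ((A + LambdaMat n lam).mulVec y j) * y j.rev +
        (starRingEnd ℂ) (y j) * (A + LambdaMat n lam).mulVec y j.rev)
      = (lam - (starRingEnd ℂ) lam) * ((starRingEnd ℂ) (y ⟨0, hn⟩) * y ⟨0, hn⟩) := by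
  -- The two double sums coming from `A` cancel after `(j, k) ↦ (k, j.rev)`.
  have hcancel : ∑ j : Fin n, (-1 : ℂ) ^ (j : ℕ) *
      ((starRingEnd ℂ) (A.mulVec y j) * y j.rev + (starRingEnd ℂ) (y j) * A.mulVec y j.rev)
      = 0 := by
    have e2 : ∑ j : Fin n, (-1 : ℂ) ^ (j : ℕ) * ((starRingEnd ℂ) (y j) * A.mulVec y j.rev)
        = ∑ j : Fin n, ∑ k : Fin n,
          (-1 : ℂ) ^ (k : ℕ) * ((starRingEnd ℂ) (y k) * (A k.rev j.rev * y j.rev)) := by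
      rw [Finset.sum_comm]
      refine Finset.sum_congr rfl fun k _ => ?_
      rw [← Finset.mul_sum, ← Finset.mul_sum]
      congr 2
      exact (Equiv.sum_comp Fin.revPerm (fun j => A k.rev j * y j)).symm
    simp only [mul_add, Finset.sum_add_distrib]
    rw [e2, ← Finset.sum_add_distrib]
    refine Finset.sum_eq_zero fun j _ => ?_
    simp only [Matrix.mulVec, dotProduct, map_sum, map_mul]
    rw [Finset.sum_mul, Finset.mul_sum, ← Finset.sum_add_distrib]
    refine Finset.sum_eq_zero fun k _ => ?_
    have hs : (-1 : ℂ) ^ (k : ℕ) * (-1 : ℂ) ^ ((k.rev : ℕ) + (j.rev : ℕ) + 1)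
        = - (-1 : ℂ) ^ (j : ℕ) := by
      have : (k : ℕ) + ((k.rev : ℕ) + (j.rev : ℕ) + 1) + j + 1 = 2 * n := by
        have := k.is_lt; have := j.is_lt
        rw [Fin.val_rev, Fin.val_rev]; omega
      have h2 : (-1 : ℂ) ^ ((k : ℕ) + ((k.rev : ℕ) + (j.rev : ℕ) + 1) + j + 1) = 1 := by
        rw [this, pow_mul]; simp
      have h3 : (-1 : ℂ) ^ (j : ℕ) * (-1 : ℂ) ^ (j : ℕ) = 1 := by
        rw [← mul_pow]; simp
      rw [← pow_add]
      rw [pow_succ, pow_add] at h2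
      linear_combination (- (-1 : ℂ) ^ (j : ℕ)) * h2 -
        (-1 : ℂ) ^ ((k : ℕ) + ((k.rev : ℕ) + (j.rev : ℕ) + 1)) * h3
    rw [hA k.rev j.rev, Fin.rev_rev, Fin.rev_rev]
    linear_combination (starRingEnd ℂ (y k) * starRingEnd ℂ (A j k) * y j.rev) * hs
  have hlast : (-1 : ℂ) ^ ((Fin.rev ⟨0, hn⟩ : Fin n) : ℕ) = -1 := by
    rw [Fin.val_rev]
    refine Odd.neg_one_pow ?_
    simpa using Nat.Even.sub_odd hn hev odd_one
  have hr : ∀ j : Fin n, j.rev = ⟨0, hn⟩ ↔ j = Fin.rev ⟨0, hn⟩ := fun j => Fin.rev_eq_iff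
  have hΛ : ∑ j : Fin n, (-1 : ℂ) ^ (j : ℕ) *
      ((starRingEnd ℂ) ((LambdaMat n lam).mulVec y j) * y j.rev +
        (starRingEnd ℂ) (y j) * (LambdaMat n lam).mulVec y j.rev)
      = (lam - (starRingEnd ℂ) lam) * ((starRingEnd ℂ) (y ⟨0, hn⟩) * y ⟨0, hn⟩) := by
    simp only [lambdaMat_mulVec hn, Fin.rev_rev, mul_add, Finset.sum_add_distrib, hr,
      apply_ite (starRingEnd ℂ), map_zero, ite_mul, mul_ite, zero_mul, mul_zero,
      Finset.sum_ite_eq', Finset.mem_univ, if_true, hlast, map_mul, pow_zero]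
    ring
  refine Eq.trans ?_ ((congrArg₂ (· + ·) hcancel hΛ).trans (zero_add _))
  rw [← Finset.sum_add_distrib]
  refine Finset.sum_congr rfl fun j _ => ?_
  simp only [Matrix.add_mulVec, Pi.add_apply, map_add]
  ring

/-- A solution whose first component vanishes on `[0,1]` is identically zero there. -/
lemma sol_eq_zero {n : ℕ} (hn : 0 < n) {F : ℝ → Matrix (Fin n) (Fin n) ℂ} (hF : IsFrakF n F)
    {lam : ℂ} {Y : ℝ → Fin n → ℂ} (hY : IsSol n F lam Y)
    (h0 : ∀ x ∈ Set.Icc (0:ℝ) 1, Y x ⟨0, hn⟩ = 0) (m : ℕ) (hm : m < n) :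
    ∀ x ∈ Set.Icc (0:ℝ) 1, Y x ⟨m, hm⟩ = 0 := by
  induction m using Nat.strong_induction_on with
  | _ m ih =>
    obtain _ | m := m
    · exact h0
    refine eq_zero_of_primitive_eq_zero ((continuous_apply _).comp_continuousOn hY.1) ?_
    intro x hx
    have hm' : m < n := by omega
    have hs := hY.2 x hx ⟨m, hm'⟩
    rw [ih m (by omega) hm' x hx, ih m (by omega) hm' 0 (by simp), zero_add] at hs
    rw [hs]
    refine intervalIntegral.integral_congr fun t ht => ?_
    rw [Set.uIcc_of_le hx.1] at ht
    have ht' : t ∈ Set.Icc (0:ℝ) 1 := ⟨ht.1, ht.2.trans hx.2⟩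
    have hne : (⟨m, hm'⟩ : Fin n).rev ≠ ⟨0, hn⟩ := by
      rw [Ne, Fin.ext_iff, Fin.val_rev]; simp only; omega
    simp only [Matrix.add_mulVec, Pi.add_apply, lambdaMat_mulVec hn, if_neg hne, add_zero]
    rw [Matrix.mulVec, dotProduct, Finset.sum_eq_single ⟨m + 1, hm⟩]
    · rw [hF.2.1 t ⟨m, hm'⟩ ⟨m + 1, hm⟩ rfl, one_mul]
    · intro k _ hk
      rcases lt_or_ge (k : ℕ) (m + 1) with h | h
      · rw [show Y t k = 0 from ih k h k.is_lt t ht', mul_zero]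
      · have : (k : ℕ) ≠ m + 1 := fun h' => hk (Fin.ext h')
        rw [hF.2.2.1 t ⟨m, hm'⟩ k (by simp only; omega), zero_mul]
    · simp

/-- The integrated Lagrange identity for a solution and its conjugate. -/
lemma integral_lagrange {n : ℕ} (hn : 0 < n) (hev : Even n) {F : ℝ → Matrix (Fin n) (Fin n) ℂ}
    (hF : IsFrakFPlus n F) {lam : ℂ} {Y : ℝ → Fin n → ℂ} (hY : IsSol n F lam Y) :
    (lam - (starRingEnd ℂ) lam) * ∫ x in (0:ℝ)..1, (starRingEnd ℂ) (Y x ⟨0, hn⟩) * Y x ⟨0, hn⟩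
      = bracket n (fun x j => (starRingEnd ℂ) (Y x j)) Y 1
        - bracket n (fun x j => (starRingEnd ℂ) (Y x j)) Y 0 := by
  set g : Fin n → ℝ → ℂ := fun j t => ((F t + LambdaMat n lam).mulVec (Y t)) j with hg
  have hgi : ∀ j, IntervalIntegrable (g j) volume 0 1 := intervalIntegrable_rhs hF.1 lam hY.1
  have hcgi : ∀ j, IntervalIntegrable (fun t => (starRingEnd ℂ) (g j t)) volume 0 1 := fun j => by
    have h := hgi j
    rw [intervalIntegrable_iff] at h ⊢
    exact Complex.conjCLE.toContinuousLinearMap.integrable_comp h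
  have hcY : ∀ x ∈ Set.Icc (0:ℝ) 1, ∀ j, (starRingEnd ℂ) (Y x j)
      = (starRingEnd ℂ) (Y 0 j) + ∫ t in (0:ℝ)..x, (starRingEnd ℂ) (g j t) := fun x hx j => by
    rw [intervalIntegral.intervalIntegral_conj, ← map_add, ← hY.2 x hx j]
  have hYc : ∀ j, ContinuousOn (fun x => Y x j) (Set.uIcc 0 1) := fun j => by
    rw [Set.uIcc_of_le zero_le_one]
    exact (continuous_apply j).comp_continuousOn hY.1
  have hparts : ∀ j : Fin n, ∫ x in (0:ℝ)..1,
      ((starRingEnd ℂ) (g j x) * Y x j.rev + (starRingEnd ℂ) (Y x j) * g j.rev x)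
      = (starRingEnd ℂ) (Y 1 j) * Y 1 j.rev - (starRingEnd ℂ) (Y 0 j) * Y 0 j.rev := fun j => by
    have h := integral_mul_primitives ((starRingEnd ℂ) (Y 0 j)) (Y 0 j.rev) (hcgi j) (hgi j.rev)
    rw [← hcY 1 (by simp) j, ← hY.2 1 (by simp) j.rev] at h
    rw [← h]
    refine intervalIntegral.integral_congr fun x hx => ?_
    rw [Set.uIcc_of_le zero_le_one] at hx
    rw [← hcY x hx j, ← hY.2 x hx j.rev]
  have hint : ∀ j : Fin n, IntervalIntegrable (fun x => (-1 : ℂ) ^ (j : ℕ) *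
      ((starRingEnd ℂ) (g j x) * Y x j.rev + (starRingEnd ℂ) (Y x j) * g j.rev x))
      volume 0 1 := fun j =>
    (((hcgi j).mul_continuousOn (hYc j.rev)).add ((hgi j.rev).continuousOn_mul
      (Complex.continuous_conj.comp_continuousOn (hYc j)))).const_mul _
  calc _ = ∫ x in (0:ℝ)..1, ∑ j : Fin n, (-1 : ℂ) ^ (j : ℕ) *
      ((starRingEnd ℂ) (g j x) * Y x j.rev + (starRingEnd ℂ) (Y x j) * g j.rev x) := by
        rw [← intervalIntegral.integral_const_mul]
        refine intervalIntegral.integral_congr_ae ?_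
        filter_upwards [(ae_restrict_iff' measurableSet_Icc).1 hF.2] with x hx hx'
        rw [Set.uIoc_of_le zero_le_one] at hx'
        exact (bracket_deriv_algebra hn hev (F x) (hx (Set.Ioc_subset_Icc_self hx')) lam
          (Y x)).symm
    _ = _ := by
        rw [intervalIntegral.integral_finsetSum fun j _ => hint j]
        simp only [intervalIntegral.integral_const_mul, hparts, bracket, mul_sub,
          Finset.sum_sub_distrib, mul_assoc]

/-- Self-adjointness of the middle problem `L_p` for `n = 2p` (Section 3): every eigenvalue of
`L_p` for `F ∈ 𝔉_n⁺` is real. -/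
theorem statement6 (p : ℕ) (hp : 1 ≤ p) (F : ℝ → Matrix (Fin (2 * p)) (Fin (2 * p)) ℂ)
    (hF : IsFrakFPlus (2 * p) F) (lam : ℂ)
    (Y : ℝ → Fin (2 * p) → ℂ) (hY : IsSol (2 * p) F lam Y)
    (hY0 : ∀ j : Fin (2 * p), (j : ℕ) < p → Y 0 j = 0)
    (hY1 : ∀ j : Fin (2 * p), (j : ℕ) < p → Y 1 j = 0)
    (hYne : ∃ x ∈ Set.Icc (0:ℝ) 1, Y x ≠ 0) :
    lam.im = 0 := by
  have hn : 0 < 2 * p := by omega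
  have hbr : ∀ x, (∀ j : Fin (2 * p), (j : ℕ) < p → Y x j = 0) →
      bracket (2 * p) (fun x j => (starRingEnd ℂ) (Y x j)) Y x = 0 := fun x hx => by
    refine Finset.sum_eq_zero fun j _ => ?_
    rcases lt_or_ge (j : ℕ) p with h | h
    · simp [hx j h]
    · rw [hx j.rev (by rw [Fin.val_rev]; omega), mul_zero]
  have hL := integral_lagrange hn (even_two_mul p) hF hY
  rw [hbr 0 hY0, hbr 1 hY1, sub_zero] at hL
  rcases mul_eq_zero.1 hL with h | h
  · exact Complex.conj_eq_iff_im.1 (sub_eq_zero.1 h).symm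
  exfalso
  have hc : ContinuousOn (fun x => Y x ⟨0, hn⟩) (Set.Icc 0 1) :=
    (continuous_apply _).comp_continuousOn hY.1
  have hc2 : ContinuousOn (fun x => ‖Y x ⟨0, hn⟩‖ ^ 2) (Set.Icc 0 1) := hc.norm.pow 2
  have hreal : ∫ x in (0:ℝ)..1, ‖Y x ⟨0, hn⟩‖ ^ 2 = 0 := by
    have : ∀ x, (starRingEnd ℂ) (Y x ⟨0, hn⟩) * Y x ⟨0, hn⟩
        = ((‖Y x ⟨0, hn⟩‖ ^ 2 : ℝ) : ℂ) := fun x => by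
      rw [Complex.conj_mul']; push_cast; rfl
    simp only [this] at h
    rw [intervalIntegral.integral_ofReal] at h
    exact_mod_cast h
  rw [intervalIntegral.integral_of_le zero_le_one, ← integral_Icc_eq_integral_Ioc,
    integral_eq_zero_iff_of_nonneg (fun x => by positivity) hc2.integrableOn_Icc] at hreal
  have hz := Measure.eqOn_Icc_of_ae_eq volume zero_ne_one hreal hc2 continuousOn_const
  obtain ⟨x, hx, hne⟩ := hYne
  refine hne (funext fun j => ?_)
  refine sol_eq_zero hn hF.1 hY (fun t ht => ?_) j j.is_lt x hx
  simpa using hz ht
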